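/- arXiv:2303.07793 — 2 statements merged into one kernel-verified Lean document; each statement's English description precedes it below -/
import Mathlib

section
/- Let F : ℝ^n ⇒ ℝ^p be a nearly convex set-valued mapping and let Ω ⊆ ℝ^n be a nearly convex set. If ri(dom F) ∩ ri Ω ≠ ∅, then ri(F(Ω)) = ⋃_{x ∈ (ri Ω) ∩ ri(dom F)} ri F(x), where F(Ω) = ⋃_{x ∈ Ω} F(x). -/
/-!
For a nearly convex set `S` in finite dimensions, a point `a ∈ S` is in `ri S` exactly when every
segment from a point of `S` to `a` can be prolonged beyond `a` inside `S`
(`ri_prolong`, `NearlyConvex.mem_ri_of_prolong`). This rests on the line segment principle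
(`NearlyConvex.combo_mem_ri`) and on the existence of relative interior points. It follows that
`ri` commutes with linear images (`NearlyConvex.ri_image`) and with the intersection of two sets
whose relative interiors meet (`NearlyConvex.ri_inter`).

Now `F(Ω)` is the projection to `ℝ^p` of `gph F ∩ (Ω × ℝ^p)`, and `ri (dom F)` is the projection
of `ri (gph F)` to `ℝ^n`, so the qualification condition makes the relative interiors of `gph F`
and `Ω × ℝ^p` meet. Hence `ri F(Ω)` consists of the `y` with `(x, y) ∈ ri (gph F)` for some `x ∈ ri Ω`
(`ri_iUnion_eq`). For `Ω = {x}` with `x ∈ ri (dom F)` this reads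
`y ∈ ri F(x) ↔ (x, y) ∈ ri (gph F)`, and the two descriptions combine to give the theorem.
-/

open Set Metric

noncomputable section

/-- A set is *nearly convex* if it lies between a convex set and its closure. -/
def NearlyConvex {E : Type*} [NormedAddCommGroup E] [NormedSpace ℝ E] (s : Set E) : Prop :=
  ∃ C : Set E, Convex ℝ C ∧ C ⊆ s ∧ s ⊆ closure C

/-- The *relative interior* of a set: points `a ∈ s` admitting `δ > 0` with
`B(a,δ) ∩ aff s ⊆ s`. -/
def ri {E : Type*} [NormedAddCommGroup E] [NormedSpace ℝ E] (s : Set E) : Set E :=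
  {a | a ∈ s ∧ ∃ δ > 0, Metric.ball a δ ∩ (affineSpan ℝ s : Set E) ⊆ s}

/-- The graph of a set-valued mapping. -/
def gph {E P : Type*} (F : E → Set P) : Set (E × P) := {q | q.2 ∈ F q.1}

/-- The domain of a set-valued mapping. -/
def domSV {E P : Type*} (F : E → Set P) : Set E := {x | (F x).Nonempty}

section General

variable {E P : Type*} [NormedAddCommGroup E] [NormedSpace ℝ E]
  [NormedAddCommGroup P] [NormedSpace ℝ P]

lemma ri_subset (S : Set E) : ri S ⊆ S := fun _ h => h.1

lemma ri_prolong {S : Set E} {a y : E} (ha : a ∈ ri S) (hy : y ∈ S) :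
    ∃ ε > 0, ∀ t : ℝ, 0 < t → t ≤ ε → a + t • (a - y) ∈ S := by
  obtain ⟨haS, δ, hδ, hsub⟩ := ha
  have hpos : 0 < ‖a - y‖ + 1 := by positivity
  refine ⟨δ / (‖a - y‖ + 1), by positivity, fun t ht hle => hsub ⟨?_, ?_⟩⟩
  · rw [Metric.mem_ball, dist_eq_norm, add_sub_cancel_left, norm_smul, Real.norm_eq_abs,
      abs_of_pos ht]
    rw [le_div_iff₀ hpos] at hle
    nlinarith
  · have := AffineMap.lineMap_mem (Q := affineSpan ℝ S) (-t)
      (subset_affineSpan ℝ S haS) (subset_affineSpan ℝ S hy)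
    rw [AffineMap.lineMap_apply_module'] at this
    have heq : a + t • (a - y) = -t • (y - a) + a := by module
    rwa [heq]

/-- The line segment principle for a set `S` between a convex set `C` and its closure, with one
endpoint in the relative interior of the core `C`. -/
lemma combo_mem_ri_of_core [FiniteDimensional ℝ E] {C S : Set E} (hC : Convex ℝ C) (hCS : C ⊆ S)
    (hSC : S ⊆ closure C) {y z : E} (hy : y ∈ ri C) (hz : z ∈ closure C) {s t : ℝ} (hs : 0 < s)
    (ht : 0 ≤ t) (hst : s + t = 1) : s • y + t • z ∈ ri S := by
  have hspan : affineSpan ℝ S ≤ affineSpan ℝ C := affineSpan_le.2 <| hSC.trans <|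
    closure_minimal (subset_affineSpan ℝ C) (affineSpan ℝ C).closed_of_finiteDimensional
  obtain ⟨hyC, δ, hδ, hsub⟩ := hy
  obtain ⟨z', hz'C, hz'⟩ := Metric.mem_closure_iff.1 hz (s * δ / 2) (by positivity)
  have key : ∀ v ∈ affineSpan ℝ C, dist v (s • y + t • z) < s * δ / 2 → v ∈ C := by
    intro v hv hd
    -- `u` is the point with `v = s • u + t • z'`; it is close to `y`, hence in `C`.
    have hu : AffineMap.lineMap z' v (s⁻¹) ∈ affineSpan ℝ C :=
      AffineMap.lineMap_mem _ (subset_affineSpan ℝ C hz'C) hv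
    set u : E := AffineMap.lineMap z' v (s⁻¹) with hu_def
    have hvu : v = s • u + t • z' := by
      rw [hu_def, AffineMap.lineMap_apply_module', smul_add, smul_smul, mul_inv_cancel₀ hs.ne',
        one_smul, add_assoc, ← add_smul, hst, one_smul, sub_add_cancel]
    have hus : s • (u - y) = (v - (s • y + t • z)) + t • (z - z') := by
      rw [hvu]; module
    have hdist : s * dist u y < s * δ := by
      calc s * dist u y = ‖s • (u - y)‖ := by
            rw [norm_smul, Real.norm_eq_abs, abs_of_pos hs, dist_eq_norm]
        _ ≤ ‖v - (s • y + t • z)‖ + ‖t • (z - z')‖ := by rw [hus]; exact norm_add_le _ _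
        _ = dist v (s • y + t • z) + t * dist z z' := by
            rw [norm_smul, Real.norm_eq_abs, abs_of_nonneg ht, dist_eq_norm, dist_eq_norm]
        _ < s * δ := by
            have : 0 ≤ dist z z' := dist_nonneg
            nlinarith
    have huC : u ∈ C := hsub ⟨Metric.mem_ball.2 (lt_of_mul_lt_mul_left hdist hs.le), hu⟩
    rw [hvu]
    exact hC huC hz'C hs.le ht hst
  have hzspan : z ∈ affineSpan ℝ C :=
    closure_minimal (subset_affineSpan ℝ C) (affineSpan ℝ C).closed_of_finiteDimensional hz
  have hw : s • y + t • z ∈ affineSpan ℝ C :=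
    (affineSpan ℝ C).convex (subset_affineSpan ℝ C hyC) hzspan hs.le ht hst
  refine ⟨hCS (key _ hw (by rw [dist_self]; positivity)), s * δ / 2, by positivity, ?_⟩
  rintro v ⟨hvb, hv⟩
  exact hCS (key v (hspan hv) hvb)

lemma ri_nonempty_of_convex [FiniteDimensional ℝ E] {C : Set E} (hC : Convex ℝ C)
    (hne : C.Nonempty) : (ri C).Nonempty := by
  obtain ⟨_, ⟨a, ha, rfl⟩⟩ := hne.intrinsicInterior hC
  obtain ⟨δ, hδ, hsub⟩ := Metric.mem_nhds_iff.1 (mem_interior_iff_mem_nhds.1 ha)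
  refine ⟨a, hsub (Metric.mem_ball_self hδ), δ, hδ, ?_⟩
  rintro v ⟨hv, hvs⟩
  exact hsub (show (⟨v, hvs⟩ : affineSpan ℝ C) ∈ Metric.ball a δ from hv)

/-- A point of a nearly convex set is relatively interior as soon as it can be reached and passed
from every point of the set. -/
lemma NearlyConvex.mem_ri_of_prolong [FiniteDimensional ℝ E] {S : Set E} (h : NearlyConvex S)
    {a : E} (ha : a ∈ S) (hp : ∀ y ∈ S, ∃ t : ℝ, 0 < t ∧ a + t • (a - y) ∈ S) : a ∈ ri S := by
  obtain ⟨C, hC, hCS, hSC⟩ := h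
  obtain ⟨y, hy⟩ := ri_nonempty_of_convex hC (closure_nonempty_iff.1 ⟨a, hSC ha⟩)
  obtain ⟨t, ht, htS⟩ := hp y (hCS hy.1)
  have h1 : (0 : ℝ) < 1 + t := by positivity
  have := combo_mem_ri_of_core hC hCS hSC hy (hSC htS) (s := t / (1 + t)) (t := 1 / (1 + t))
    (by positivity) (by positivity) (by field_simp; ring)
  convert this using 1
  match_scalars <;> field_simp <;> ring

lemma NearlyConvex.ri_subset_ri_core [FiniteDimensional ℝ E] {C S : Set E} (hC : Convex ℝ C)
    (hCS : C ⊆ S) (hSC : S ⊆ closure C) : ri S ⊆ ri C := by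
  intro a ha
  obtain ⟨y, hy⟩ := ri_nonempty_of_convex hC (closure_nonempty_iff.1 ⟨a, hSC ha.1⟩)
  obtain ⟨t, ht, htS⟩ := ri_prolong ha (hCS hy.1)
  have h1 : (0 : ℝ) < 1 + t := by positivity
  have := combo_mem_ri_of_core hC subset_rfl subset_closure hy (hSC (htS t ht le_rfl))
    (s := t / (1 + t)) (t := 1 / (1 + t)) (by positivity) (by positivity) (by field_simp; ring)
  convert this using 1
  match_scalars <;> field_simp <;> ring

/-- The line segment principle for nearly convex sets. -/
lemma NearlyConvex.combo_mem_ri [FiniteDimensional ℝ E] {S : Set E} (h : NearlyConvex S)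
    {y z : E} (hy : y ∈ ri S) (hz : z ∈ S) {s t : ℝ} (hs : 0 < s)
    (ht : 0 ≤ t) (hst : s + t = 1) : s • y + t • z ∈ ri S := by
  obtain ⟨C, hC, hCS, hSC⟩ := h
  exact combo_mem_ri_of_core hC hCS hSC (NearlyConvex.ri_subset_ri_core hC hCS hSC hy) (hSC hz)
    hs ht hst

/-- If `a` lies strictly between a relative interior point `y` and a point of `S`, then `a` is
relatively interior. -/
lemma NearlyConvex.mem_ri_of_between [FiniteDimensional ℝ E] {S : Set E} (h : NearlyConvex S)
    {a y : E} (hy : y ∈ ri S) {t : ℝ} (ht : 0 < t) (hz : a + t • (a - y) ∈ S) : a ∈ ri S := by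
  have h1 : (0 : ℝ) < 1 + t := by positivity
  have := h.combo_mem_ri hy hz (s := t / (1 + t)) (t := 1 / (1 + t))
    (by positivity) (by positivity) (by field_simp; ring)
  convert this using 1
  match_scalars <;> field_simp <;> ring

lemma NearlyConvex.convex_ri [FiniteDimensional ℝ E] {S : Set E} (h : NearlyConvex S) :
    Convex ℝ (ri S) := by
  intro y hy z hz s t hs ht hst
  rcases hs.eq_or_lt with rfl | hs
  · obtain rfl : t = 1 := by linarith
    simpa using hz
  · exact h.combo_mem_ri hy hz.1 hs ht hst

lemma NearlyConvex.ri_nonempty [FiniteDimensional ℝ E] {S : Set E} (h : NearlyConvex S)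
    (hne : S.Nonempty) : (ri S).Nonempty := by
  obtain ⟨C, hC, hCS, hSC⟩ := h
  obtain ⟨y, hy⟩ := ri_nonempty_of_convex hC (closure_nonempty_iff.1 (hne.mono hSC))
  refine ⟨y, ?_⟩
  simpa using combo_mem_ri_of_core hC hCS hSC hy (subset_closure hy.1) one_pos le_rfl (by simp)

lemma NearlyConvex.image {S : Set E} (h : NearlyConvex S) (f : E →L[ℝ] P) :
    NearlyConvex (f '' S) := by
  obtain ⟨C, hC, hCS, hSC⟩ := h
  exact ⟨f '' C, hC.linear_image f.toLinearMap, image_mono hCS,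
    (image_mono hSC).trans (image_closure_subset_closure_image f.continuous)⟩

lemma NearlyConvex.ri_image [FiniteDimensional ℝ E] [FiniteDimensional ℝ P] {S : Set E}
    (h : NearlyConvex S) (f : E →L[ℝ] P) : ri (f '' S) = f '' ri S := by
  apply Subset.antisymm
  · intro b hb
    obtain ⟨a₀, ha₀⟩ := h.ri_nonempty (image_nonempty.1 ⟨b, hb.1⟩)
    obtain ⟨t, ht, htS⟩ := ri_prolong hb (mem_image_of_mem f ha₀.1)
    obtain ⟨s, hs, hsb⟩ := htS t ht le_rfl
    have h1 : (0 : ℝ) < 1 + t := by positivity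
    refine ⟨(t / (1 + t)) • a₀ + (1 / (1 + t)) • s,
      h.combo_mem_ri ha₀ hs (by positivity) (by positivity) (by field_simp; ring), ?_⟩
    rw [map_add, map_smul, map_smul, hsb]
    match_scalars <;> field_simp <;> ring
  · rintro _ ⟨a, ha, rfl⟩
    refine (h.image f).mem_ri_of_prolong (mem_image_of_mem f ha.1) ?_
    rintro _ ⟨y, hy, rfl⟩
    obtain ⟨t, ht, htS⟩ := ri_prolong ha hy
    exact ⟨t, ht, _, htS t ht le_rfl, by simp⟩

lemma NearlyConvex.inter [FiniteDimensional ℝ E] {S T : Set E} (hS : NearlyConvex S)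
    (hT : NearlyConvex T) (hne : (ri S ∩ ri T).Nonempty) : NearlyConvex (S ∩ T) := by
  obtain ⟨z, hzS, hzT⟩ := hne
  refine ⟨ri S ∩ ri T, hS.convex_ri.inter hT.convex_ri,
    inter_subset_inter (ri_subset S) (ri_subset T), ?_⟩
  rintro x ⟨hxS, hxT⟩
  -- `x` is the limit of `t • z + (1 - t) • x` as `t` decreases to `0`.
  have hlim : Filter.Tendsto (fun t : ℝ => t • z + (1 - t) • x) (nhdsWithin 0 (Ioi 0)) (nhds x) := by
    have : Continuous (fun t : ℝ => t • z + (1 - t) • x) := by fun_prop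
    simpa using (this.tendsto 0).mono_left nhdsWithin_le_nhds
  refine mem_closure_of_tendsto hlim ?_
  filter_upwards [Ioo_mem_nhdsGT (zero_lt_one' ℝ)] with t ht
  exact ⟨hS.combo_mem_ri hzS hxS ht.1 (by linarith [ht.2]) (by ring),
    hT.combo_mem_ri hzT hxT ht.1 (by linarith [ht.2]) (by ring)⟩

lemma NearlyConvex.ri_inter [FiniteDimensional ℝ E] {S T : Set E} (hS : NearlyConvex S)
    (hT : NearlyConvex T) (hne : (ri S ∩ ri T).Nonempty) : ri (S ∩ T) = ri S ∩ ri T := by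
  apply Subset.antisymm
  · intro a ha
    obtain ⟨z, hzS, hzT⟩ := hne
    obtain ⟨t, ht, h⟩ := ri_prolong ha ⟨hzS.1, hzT.1⟩
    have h := h t ht le_rfl
    exact ⟨hS.mem_ri_of_between hzS ht h.1, hT.mem_ri_of_between hzT ht h.2⟩
  · rintro a ⟨haS, haT⟩
    refine (hS.inter hT hne).mem_ri_of_prolong ⟨haS.1, haT.1⟩ fun y hy => ?_
    obtain ⟨ε₁, h₁, hp₁⟩ := ri_prolong haS hy.1
    obtain ⟨ε₂, h₂, hp₂⟩ := ri_prolong haT hy.2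
    exact ⟨min ε₁ ε₂, lt_min h₁ h₂, hp₁ _ (lt_min h₁ h₂) (min_le_left _ _),
      hp₂ _ (lt_min h₁ h₂) (min_le_right _ _)⟩

lemma NearlyConvex.prod_univ {Ω : Set E} (h : NearlyConvex Ω) :
    NearlyConvex (Ω ×ˢ (univ : Set P)) := by
  obtain ⟨C, hC, hCS, hSC⟩ := h
  refine ⟨C ×ˢ univ, hC.prod convex_univ, prod_mono hCS subset_rfl, ?_⟩
  rw [closure_prod_eq, closure_univ]
  exact prod_mono hSC subset_rfl

lemma NearlyConvex.ri_prod_univ [FiniteDimensional ℝ E] [FiniteDimensional ℝ P] {Ω : Set E}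
    (h : NearlyConvex Ω) : ri (Ω ×ˢ (univ : Set P)) = ri Ω ×ˢ univ := by
  ext ⟨x, y⟩
  constructor
  · intro hxy
    have := (h.prod_univ (P := P)).ri_image (ContinuousLinearMap.fst ℝ E P)
    rw [ContinuousLinearMap.coe_fst', fst_image_prod _ univ_nonempty] at this
    exact ⟨this ▸ mem_image_of_mem Prod.fst hxy, mem_univ _⟩
  · rintro ⟨hx, -⟩
    refine h.prod_univ.mem_ri_of_prolong ⟨hx.1, mem_univ _⟩ ?_
    rintro ⟨x', y'⟩ ⟨hx', -⟩
    obtain ⟨t, ht, htS⟩ := ri_prolong hx hx'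
    exact ⟨t, ht, htS t ht le_rfl, mem_univ _⟩

lemma nearlyConvex_singleton (x : E) : NearlyConvex ({x} : Set E) :=
  ⟨{x}, convex_singleton x, subset_rfl, subset_closure⟩

lemma ri_singleton (x : E) : ri ({x} : Set E) = {x} := by
  refine (ri_subset _).antisymm ?_
  rintro _ rfl
  refine ⟨rfl, 1, one_pos, ?_⟩
  rintro v ⟨-, hv⟩
  simpa using hv

lemma ri_domSV [FiniteDimensional ℝ E] [FiniteDimensional ℝ P] {F : E → Set P}
    (hF : NearlyConvex (gph F)) : ri (domSV F) = Prod.fst '' ri (gph F) := by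
  have himg : domSV F = ContinuousLinearMap.fst ℝ E P '' gph F := by
    ext x
    simp [domSV, gph, Set.Nonempty]
  rw [himg, hF.ri_image, ContinuousLinearMap.coe_fst']

/-- The relative interior of `F(Ω)`, described through the graph of `F`. -/
lemma ri_iUnion_eq [FiniteDimensional ℝ E] [FiniteDimensional ℝ P] {F : E → Set P} {Ω : Set E}
    (hF : NearlyConvex (gph F)) (hΩ : NearlyConvex Ω) (hqc : (ri (domSV F) ∩ ri Ω).Nonempty) :
    ri (⋃ x ∈ Ω, F x) = {y | ∃ x ∈ ri Ω, (x, y) ∈ ri (gph F)} := by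
  have himg : (⋃ x ∈ Ω, F x) = ContinuousLinearMap.snd ℝ E P '' (gph F ∩ Ω ×ˢ univ) := by
    ext y
    simp [gph, and_comm]
  have hne : (ri (gph F) ∩ ri (Ω ×ˢ (univ : Set P))).Nonempty := by
    obtain ⟨x, hxD, hxΩ⟩ := hqc
    rw [ri_domSV hF] at hxD
    obtain ⟨q, hq, rfl⟩ := hxD
    rw [hΩ.ri_prod_univ]
    exact ⟨q, hq, hxΩ, mem_univ _⟩
  rw [himg, (hF.inter hΩ.prod_univ hne).ri_image, hF.ri_inter hΩ.prod_univ hne, hΩ.ri_prod_univ]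
  ext y
  simp [and_comm]

end General

theorem ri_image_of_nearlyConvex (n p : ℕ)
    (F : EuclideanSpace ℝ (Fin n) → Set (EuclideanSpace ℝ (Fin p)))
    (Ω : Set (EuclideanSpace ℝ (Fin n)))
    (hF : NearlyConvex (gph F)) (hΩ : NearlyConvex Ω)
    (hqc : (ri (domSV F) ∩ ri Ω).Nonempty) :
    ri (⋃ x ∈ Ω, F x) = ⋃ x ∈ ri Ω ∩ ri (domSV F), ri (F x) := by
  have hfib : ∀ x ∈ ri (domSV F), ri (F x) = {y | (x, y) ∈ ri (gph F)} := by
    intro x hx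
    have := ri_iUnion_eq hF (nearlyConvex_singleton x) ⟨x, hx, by rw [ri_singleton]; rfl⟩
    simpa [ri_singleton] using this
  rw [ri_iUnion_eq hF hΩ hqc]
  ext y
  simp only [mem_ofPred_eq, mem_iUnion, exists_prop]
  constructor
  · rintro ⟨x, hx, hxy⟩
    have hxD : x ∈ ri (domSV F) := by
      rw [ri_domSV hF]
      exact mem_image_of_mem Prod.fst hxy
    exact ⟨x, ⟨hx, hxD⟩, by rw [hfib x hxD]; exact hxy⟩
  · rintro ⟨x, ⟨hx, hxD⟩, hy⟩
    rw [hfib x hxD] at hy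
    exact ⟨x, hx, hy⟩
end
end

section
/- Let f : ℝ^n × ℝ^p → [−∞, ∞] be a proper nearly convex function and let F : ℝ^n ⇒ ℝ^p be a nearly convex set-valued mapping. Suppose ri(dom f) ∩ ri(gph F) ≠ ∅. Then the optimal value function μ(x) = inf{f(x, y) | y ∈ F(x)} (with inf over the empty set equal to ∞) is a nearly convex function. -/
/-!
Let `C ⊆ epi f ⊆ cl C` and `D ⊆ gph F ⊆ cl D` with `C`, `D` convex. The proof rests on the
line-segment principle (`combo_mem_ri`): a proper convex combination of a relative interior point
and a closure point of a convex set is a relative interior point. It gives `ri Ω ⊆ ri C` whenever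
`C ⊆ Ω ⊆ cl C` (`ri_subset_of_between`), and it lifts every `z ∈ ri (dom f)` to a point
`(z, γ) ∈ ri C` (`exists_mem_ri_of_mem_ri_domF`): prolong the segment from the projection of some
point of `ri C` through `z` slightly beyond `z`, staying in `dom f`, and combine the two points of
`epi f` lying over its endpoints.

Apply this to the common point `z` of `ri (dom f)` and `ri (gph F)`. Each point of
`epi f ∩ (gph F × ℝ)` is then the limit of points of `C ∩ (D × ℝ)` along the segment from `(z, γ)`.
The convex set witnessing near convexity of the epigraph of the optimal value function `μ` is the
image of `C ∩ (D × ℝ)` under `((x, y), γ) ↦ (x, γ)`. Since the infimum need not be attained,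
`(x, γ) ∈ epi μ` is reached as the limit of `(x, γ + ε)`, where some `y ∈ F x` satisfies
`f (x, y) ≤ γ + ε`.
-/

open Set Metric

noncomputable section

/-- The epigraph of an extended-real-valued function. -/
def epiF {E : Type*} (f : E → EReal) : Set (E × ℝ) := {p | f p.1 ≤ (p.2 : EReal)}

/-- The effective domain of an extended-real-valued function. -/
def domF {E : Type*} (f : E → EReal) : Set E := {x | f x < ⊤}

/-- A function is proper if its domain is nonempty and it never takes the value `⊥`. -/
def ProperFn {E : Type*} (f : E → EReal) : Prop :=
  {x | f x < ⊤}.Nonempty ∧ ∀ x, f x ≠ ⊥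

open Filter Topology

section RelativeInterior

variable {E : Type*} [NormedAddCommGroup E] [NormedSpace ℝ E]

/-- The point `c + ε • (c - d)` beyond `c` on the line from `d` stays in a set of which `c` is a
relative interior point, for some small `ε > 0`. -/
theorem exists_prolong_mem {s : Set E} {c d : E} (hc : c ∈ ri s) (hd : d ∈ affineSpan ℝ s) :
    ∃ ε : ℝ, 0 < ε ∧ c + ε • (c - d) ∈ s := by
  obtain ⟨hcs, δ, hδ, hball⟩ := hc
  have hlim : Tendsto (fun ε : ℝ => c + ε • (c - d)) (𝓝[>] 0) (𝓝 c) := by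
    have h : Continuous fun ε : ℝ => c + ε • (c - d) := by fun_prop
    have h0 := h.tendsto 0
    simp only [zero_smul, add_zero] at h0
    exact h0.mono_left nhdsWithin_le_nhds
  obtain ⟨ε, hε, hεpos⟩ :=
    ((hlim.eventually (Metric.ball_mem_nhds c hδ)).and self_mem_nhdsWithin).exists
  refine ⟨ε, hεpos, hball ⟨hε, ?_⟩⟩
  have hcA : c ∈ affineSpan ℝ s := subset_affineSpan ℝ s hcs
  have h := AffineSubspace.smul_vsub_vadd_mem (affineSpan ℝ s) ε hcA hd hcA
  simpa [add_comm] using h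

variable [FiniteDimensional ℝ E]

theorem closure_subset_affineSpan (s : Set E) : closure s ⊆ affineSpan ℝ s :=
  closure_minimal (subset_affineSpan ℝ s)
    (AffineSubspace.closed_of_finiteDimensional (affineSpan ℝ s))

/-- The line-segment principle. -/
theorem combo_mem_ri {C : Set E} (hC : Convex ℝ C)
    {c b : E} (hc : c ∈ ri C) (hb : b ∈ closure C) {t : ℝ} (ht : 0 < t) (ht1 : t ≤ 1) :
    t • c + (1 - t) • b ∈ ri C := by
  obtain ⟨hcC, δ, hδ, hball⟩ := hc
  -- Any `w` near `t • c + (1 - t) • b` is a combination of a suitable `b' ∈ C` near `b` and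
  -- of the point `t⁻¹ • (w - (1 - t) • b')`, which is near `c`.
  have key : ∀ w, dist w (t • c + (1 - t) • b) < t * δ / 2 →
      w ∈ affineSpan ℝ C → w ∈ C := by
    intro w hw hwA
    obtain ⟨b', hb'C, hb'⟩ := Metric.mem_closure_iff.1 hb (t * δ / 2) (by positivity)
    have hb'A : b' ∈ affineSpan ℝ C := subset_affineSpan ℝ C hb'C
    set c' : E := t⁻¹ • (w - b') + b' with hc'
    have hc'A : c' ∈ affineSpan ℝ C := by
      simpa using AffineSubspace.smul_vsub_vadd_mem (affineSpan ℝ C) t⁻¹ hwA hb'A hb'A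
    have hwc : w = t • c' + (1 - t) • b' := by
      rw [hc', smul_add, smul_smul, mul_inv_cancel₀ ht.ne']
      module
    have hc'C : c' ∈ C := by
      refine hball ⟨?_, hc'A⟩
      rw [Metric.mem_ball, dist_eq_norm]
      have h1 : t • (c' - c) = (w - (t • c + (1 - t) • b)) + (1 - t) • (b - b') := by
        rw [hwc]; module
      have h2 : t * ‖c' - c‖ < t * δ := by
        calc t * ‖c' - c‖ = ‖t • (c' - c)‖ := by rw [norm_smul, Real.norm_of_nonneg ht.le]
          _ ≤ ‖w - (t • c + (1 - t) • b)‖ + ‖(1 - t) • (b - b')‖ := by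
            rw [h1]; exact norm_add_le _ _
          _ ≤ ‖w - (t • c + (1 - t) • b)‖ + ‖b - b'‖ := by
            gcongr
            rw [norm_smul, Real.norm_of_nonneg (by linarith)]
            exact mul_le_of_le_one_left (norm_nonneg _) (by linarith)
          _ < t * δ := by
            rw [dist_eq_norm] at hw hb'
            linarith
      exact lt_of_mul_lt_mul_left h2 ht.le
    rw [hwc]
    exact hC hc'C hb'C ht.le (by linarith) (by ring)
  have hbA : b ∈ affineSpan ℝ C := closure_subset_affineSpan C hb
  have hpA : t • c + (1 - t) • b ∈ affineSpan ℝ C :=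
    (affineSpan ℝ C).convex (subset_affineSpan ℝ C hcC) hbA ht.le (by linarith) (by ring)
  exact ⟨key _ (by rw [dist_self]; positivity) hpA, t * δ / 2, by positivity,
    fun w hw => key w hw.1 hw.2⟩

theorem nonempty_ri {C : Set E} (hC : Convex ℝ C) (hne : C.Nonempty) : (ri C).Nonempty := by
  obtain ⟨c, hc⟩ := hne.intrinsicInterior hC
  obtain ⟨a, ha, rfl⟩ := mem_intrinsicInterior.1 hc
  obtain ⟨δ, hδ, hball⟩ := Metric.mem_nhds_iff.1 (mem_interior_iff_mem_nhds.1 ha)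
  exact ⟨a, intrinsicInterior_subset hc, δ, hδ,
    fun w hw => hball (show (⟨w, hw.2⟩ : affineSpan ℝ C) ∈ Metric.ball a δ from hw.1)⟩

/-- Prolonging the segment from a point of `ri C` slightly beyond `a ∈ ri s` reaches a point of
`s ⊆ closure C`, so the line-segment principle puts `a` in `ri C`. -/
theorem ri_subset_of_between {C s : Set E} (hC : Convex ℝ C) (hCs : C ⊆ s)
    (hsC : s ⊆ closure C) : ri s ⊆ ri C := by
  intro a ha
  obtain ⟨c, hc⟩ := nonempty_ri hC (closure_nonempty_iff.1 ⟨a, hsC ha.1⟩)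
  obtain ⟨ε, hε, hmem⟩ := exists_prolong_mem ha (subset_affineSpan ℝ s (hCs hc.1))
  have h := combo_mem_ri hC hc (hsC hmem) (t := ε / (1 + ε)) (by positivity)
    (by rw [div_le_one (by positivity)]; linarith)
  convert h using 1
  match_scalars <;> field_simp <;> ring

/-- A relative interior point of `dom f` lifts to the relative interior of a convex set `C` with
`C ⊆ epi f ⊆ closure C`. -/
theorem exists_mem_ri_of_mem_ri_domF {f : E → EReal} {C : Set (E × ℝ)} (hC : Convex ℝ C)
    (hCf : C ⊆ epiF f) (hfC : epiF f ⊆ closure C) {z : E} (hz : z ∈ ri (domF f)) :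
    ∃ γ : ℝ, (z, γ) ∈ ri C := by
  have hlift : ∀ w ∈ domF f, ∃ γ : ℝ, (w, γ) ∈ epiF f := fun w hw => by
    obtain ⟨γ, hγ, -⟩ := EReal.lt_iff_exists_real_btwn.1 hw
    exact ⟨γ, hγ.le⟩
  obtain ⟨γ₀, hγ₀⟩ := hlift z hz.1
  obtain ⟨c, hc⟩ := nonempty_ri hC (closure_nonempty_iff.1 ⟨_, hfC hγ₀⟩)
  have hcdom : c.1 ∈ domF f := lt_of_le_of_lt (hCf hc.1) (EReal.coe_lt_top c.2)
  obtain ⟨ε, hε, hmem⟩ := exists_prolong_mem hz (subset_affineSpan ℝ _ hcdom)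
  obtain ⟨γ, hγ⟩ := hlift _ hmem
  have h := combo_mem_ri hC hc (hfC hγ) (t := ε / (1 + ε)) (by positivity)
    (by rw [div_le_one (by positivity)]; linarith)
  refine ⟨ε / (1 + ε) * c.2 + (1 - ε / (1 + ε)) * γ, ?_⟩
  convert h using 1
  refine Prod.ext ?_ (by simp)
  simp only [Prod.fst_add, Prod.smul_fst]
  match_scalars <;> field_simp <;> ring

end RelativeInterior

theorem optimal_value_nearlyConvex (n p : ℕ)
    (f : EuclideanSpace ℝ (Fin n) × EuclideanSpace ℝ (Fin p) → EReal)
    (F : EuclideanSpace ℝ (Fin n) → Set (EuclideanSpace ℝ (Fin p)))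
    (hfp : ProperFn f) (hf : NearlyConvex (epiF f)) (hF : NearlyConvex (gph F))
    (hqc : (ri (domF f) ∩ ri (gph F)).Nonempty) :
    NearlyConvex (epiF (fun x => ⨅ y ∈ F x, f (x, y))) := by
  obtain ⟨C, hC, hCf, hfC⟩ := hf
  obtain ⟨D, hD, hDF, hFD⟩ := hF
  obtain ⟨z, hzf, hzF⟩ := hqc
  have hzD : z ∈ ri D := ri_subset_of_between hD hDF hFD hzF
  obtain ⟨γ₀, hz⟩ := exists_mem_ri_of_mem_ri_domF hC hCf hfC hzf
  set G : Set ((EuclideanSpace ℝ (Fin n) × EuclideanSpace ℝ (Fin p)) × ℝ) :=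
    C ∩ Prod.fst ⁻¹' D with hG
  have hGconv : Convex ℝ G :=
    hC.inter (hD.linear_preimage
      (LinearMap.fst ℝ (EuclideanSpace ℝ (Fin n) × EuclideanSpace ℝ (Fin p)) ℝ))
  let π : (EuclideanSpace ℝ (Fin n) × EuclideanSpace ℝ (Fin p)) × ℝ →ₗ[ℝ]
      EuclideanSpace ℝ (Fin n) × ℝ := (LinearMap.fst ℝ _ _).prodMap LinearMap.id
  have hπ : Continuous π := (continuous_fst.comp continuous_fst).prodMk continuous_snd
  have hclosure : ∀ q : (EuclideanSpace ℝ (Fin n) × EuclideanSpace ℝ (Fin p)) × ℝ,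
      q ∈ epiF f → q.1 ∈ gph F → q ∈ closure G := by
    intro q hq hqF
    have hlim : Tendsto (fun t : ℝ => t • (z, γ₀) + (1 - t) • q) (𝓝[>] 0) (𝓝 q) := by
      have h : Continuous fun t : ℝ => t • (z, γ₀) + (1 - t) • q := by fun_prop
      have h0 := h.tendsto 0
      simp only [zero_smul, zero_add, sub_zero, one_smul] at h0
      exact h0.mono_left nhdsWithin_le_nhds
    refine mem_closure_of_tendsto hlim ?_
    filter_upwards [Ioc_mem_nhdsGT (zero_lt_one' ℝ)] with t ht
    exact ⟨(combo_mem_ri hC hz (hfC hq) ht.1 ht.2).1,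
      (combo_mem_ri hD hzD (hFD hqF) ht.1 ht.2).1⟩
  refine ⟨π '' G, hGconv.linear_image π, ?_, ?_⟩
  · rintro _ ⟨q, ⟨hqC, hqD⟩, rfl⟩
    exact iInf₂_le_of_le (f := fun y (_ : y ∈ F q.1.1) => f (q.1.1, y)) q.1.2 (hDF hqD) (hCf hqC)
  · rintro ⟨x, γ⟩ hx
    have hlim : Tendsto (fun ε : ℝ => (x, γ + ε)) (𝓝[>] 0) (𝓝 (x, γ)) := by
      have h : Continuous fun ε : ℝ => (x, γ + ε) := by fun_prop
      have h0 := h.tendsto 0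
      simp only [add_zero] at h0
      exact h0.mono_left nhdsWithin_le_nhds
    rw [← closure_closure]
    refine mem_closure_of_tendsto hlim ?_
    filter_upwards [self_mem_nhdsWithin] with ε hε
    have hlt : (⨅ y ∈ F x, f (x, y)) < ((γ + ε : ℝ) : EReal) :=
      lt_of_le_of_lt hx (EReal.coe_lt_coe_iff.2 (lt_add_of_pos_right γ hε))
    obtain ⟨y, hy, hfy⟩ := by simpa only [iInf_lt_iff, exists_prop] using hlt
    exact image_closure_subset_closure_image hπ
      ⟨((x, y), γ + ε), hclosure _ hfy.le hy, rfl⟩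
end
end
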